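/- Let $f : \mathbb{R}^{n_x} \times \mathbb{R}^{n_u} \to \mathbb{R}^{n_x}$ and let $\gamma^x \in \mathbb{R}^{n_x \times n_x}$, $\gamma^u \in \mathbb{R}^{n_u \times n_u}$ satisfy $f(\gamma^x x, \gamma^u u) = \gamma^x f(x,u)$ for all $x, u$. Let $A \in \mathbb{R}^{n_z \times n_z}$, $B \in \mathbb{R}^{n_z \times n_u}$, $C \in \mathbb{R}^{n_x \times n_z}$ and let $G_z \in \mathbb{R}^{n_z \times n_z}$, $G_v \in \mathbb{R}^{n_u \times n_u}$ satisfy $A G_z = G_z A$, $B G_v = G_z B$, and $C G_z = \gamma^x C$. Let $\Phi : \mathbb{R}^{n_x} \to \mathbb{R}^{n_z}$ and $\Psi : \mathbb{R}^{n_u} \to \mathbb{R}^{n_u}$ be maps satisfying the equivariance relations $\Phi(\gamma^x x) = G_z \Phi(x)$ for all $x$ and $\Psi(\gamma^u u) = G_v \Psi(u)$ for all $u$. Fix an initial state $x_0$ and an input sequence $(u_t)_{t\ge 0}$, and define the lifted trajectories $z_{t+1} = A z_t + B \Psi(u_t)$ with $z_0 = \Phi(x_0)$, and $z'_{t+1}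 = A z'_t + B \Psi(\gamma^u u_t)$ with $z'_0 = \Phi(\gamma^x x_0)$, together with the predictions $\hat{x}_t = C z_t$ and $\widehat{\gamma^x x}_t = C z'_t$. Then $\widehat{\gamma^x x}_t = \gamma^x \hat{x}_t$ for all $t \ge 0$. -/

import Mathlib

/-- For a system with symmetry `(γx, γu)` and a symmetry-respecting Koopman predictor
`(A, B, C)` with lifted actions `(Gz, Gv)` and equivariant lifting functions `Φ, Ψ`,
the prediction of the symmetrized trajectory is the symmetrized prediction. -/
theorem symmetrized_prediction (nx nu nz : ℕ)
    (f : (Fin nx → ℝ) → (Fin nu → ℝ) → (Fin nx → ℝ))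
    (γx : Matrix (Fin nx) (Fin nx) ℝ) (γu : Matrix (Fin nu) (Fin nu) ℝ)
    (hsym : ∀ x u, f (γx.mulVec x) (γu.mulVec u) = γx.mulVec (f x u))
    (A : Matrix (Fin nz) (Fin nz) ℝ) (B : Matrix (Fin nz) (Fin nu) ℝ)
    (C : Matrix (Fin nx) (Fin nz) ℝ)
    (Gz : Matrix (Fin nz) (Fin nz) ℝ) (Gv : Matrix (Fin nu) (Fin nu) ℝ)
    (hA : A * Gz = Gz * A) (hB : B * Gv = Gz * B) (hC : C * Gz = γx * C)
    (Φ : (Fin nx → ℝ) → (Fin nz → ℝ)) (Ψ : (Fin nu → ℝ) → (Fin nu → ℝ))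
    (hΦ : ∀ x, Φ (γx.mulVec x) = Gz.mulVec (Φ x))
    (hΨ : ∀ u, Ψ (γu.mulVec u) = Gv.mulVec (Ψ u))
    (x0 : Fin nx → ℝ) (u : ℕ → Fin nu → ℝ)
    (z z' : ℕ → Fin nz → ℝ)
    (hz : ∀ t, z (t + 1) = A.mulVec (z t) + B.mulVec (Ψ (u t)))
    (hz0 : z 0 = Φ x0)
    (hz' : ∀ t, z' (t + 1) = A.mulVec (z' t) + B.mulVec (Ψ (γu.mulVec (u t))))
    (hz'0 : z' 0 = Φ (γx.mulVec x0)) :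
    ∀ t, C.mulVec (z' t) = γx.mulVec (C.mulVec (z t)) := by
  have key : ∀ t, z' t = Gz.mulVec (z t) := by
    intro t
    induction t with
    | zero => rw [hz'0, hz0, hΦ]
    | succ k ih =>
      rw [hz', hz, ih, hΨ, Matrix.mulVec_add]
      simp only [Matrix.mulVec_mulVec]
      rw [hA, hB]
  intro t
  rw [key, Matrix.mulVec_mulVec, Matrix.mulVec_mulVec, hC]
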